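/- arXiv:1903.09482 — 4 statements merged into one kernel-verified Lean document; each statement's English description precedes it below -/
import Mathlib

section
/- Let (P_k, F_k, S_k, T_k) be a known process model and (P_r, F_r, S_r, T_r) a ground truth process model with initial state s₀. Assume T_k ⊆ S_k × S_k and s₀ ∈ S_k. If there exists a forced state (a state s ∈ S_r \ S_k), then there exists a forced transition (a transition t ∈ T_r \ T_k). -/
/-- A process model `(P, F, S, T)`: a set `P` of variable assignments, a set `S` of
states, a surjective partial observation function `F : P ⇀ S` (encoded via `Option`),
and a transition relation `T ⊆ S × S`. -/
structure ProcessModel (V σ : Type*) where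
  P : Set V
  S : Set σ
  F : V → Option σ
  dom_sub : ∀ p s, F p = some s → p ∈ P
  range_sub : ∀ p s, F p = some s → s ∈ S
  surj : ∀ s ∈ S, ∃ p, F p = some s
  T : Set (σ × σ)
  T_sub : T ⊆ S ×ˢ S

/-- The projection of a longer assignment to its first `m` coordinates. -/
def proj {V : Type*} {m n : ℕ} (h : m ≤ n) (p : Fin n → V) : Fin m → V :=
  fun i => p (Fin.castLE h i)

/-- The known model `K` and ground truth model `R` are connected by inclusion and
projection: `P_k = P_k^1 × ⋯ × P_k^m`, `P_r = P_r^1 × ⋯ × P_r^n`, `m < n`, and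
`P_k^i ⊆ P_r^i` for the common coordinates. -/
structure Connection {V σ : Type*} {m n : ℕ}
    (K : ProcessModel (Fin m → V) σ) (R : ProcessModel (Fin n → V) σ) where
  hmn : m < n
  Pk : Fin m → Set V
  Pr : Fin n → Set V
  hPk : K.P = {p | ∀ i, p i ∈ Pk i}
  hPr : R.P = {p | ∀ i, p i ∈ Pr i}
  hsub : ∀ i : Fin m, Pk i ⊆ Pr (Fin.castLE hmn.le i)

/-- `p ∈ P_r` is observable in the known model iff `p ∈ dom π` (its projection lies
in `P_k`) and `π p ∈ dom F_k`. -/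
def Observable {V σ : Type*} {m n : ℕ} (K : ProcessModel (Fin m → V) σ)
    (h : m ≤ n) (p : Fin n → V) : Prop :=
  proj h p ∈ K.P ∧ ∃ s, K.F (proj h p) = some s

/-- `p` is correctly observed iff it is observable and `F_k (π p) = F_r p`. -/
def CorrectlyObserved {V σ : Type*} {m n : ℕ} (K : ProcessModel (Fin m → V) σ)
    (R : ProcessModel (Fin n → V) σ) (h : m ≤ n) (p : Fin n → V) : Prop :=
  Observable K h p ∧ K.F (proj h p) = R.F p

/-- A transition `(s_a, s_b) ∈ T_r` is an instance of Process Model Inconsistency iff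
some pair of variable assignments giving rise to it is unobservable or not correctly
observed in the known process model. -/
def PMI {V σ : Type*} {m n : ℕ} (K : ProcessModel (Fin m → V) σ)
    (R : ProcessModel (Fin n → V) σ) (h : m ≤ n) (sa sb : σ) : Prop :=
  ∃ pa pb : Fin n → V, R.F pa = some sa ∧ R.F pb = some sb ∧
    (¬ (Observable K h pa ∧ Observable K h pb) ∨
     ¬ (CorrectlyObserved K R h pa ∧ CorrectlyObserved K R h pb))

/-- If the ground truth model (with initial state `s₀ ∈ S_k`, from which
every state of `S_r` is reachable via `T_r`) has a forced state `s ∈ S_r \ S_k`,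
then there is a forced transition `t ∈ T_r \ T_k`. -/
theorem forced_state_implies_forced_transition {Vk Vr σ : Type*}
    (K : ProcessModel Vk σ) (R : ProcessModel Vr σ)
    (s₀ : σ) (hs₀r : s₀ ∈ R.S)
    (hreach : ∀ s ∈ R.S, Relation.ReflTransGen (fun a b => (a, b) ∈ R.T) s₀ s)
    (hTk : K.T ⊆ K.S ×ˢ K.S)
    (hs₀k : s₀ ∈ K.S)
    (hforced : ∃ s, s ∈ R.S \ K.S) :
    ∃ t, t ∈ R.T \ K.T := by
  obtain ⟨s, hsR, hsK⟩ := hforced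
  rcases Relation.ReflTransGen.cases_tail (hreach s hsR) with h | ⟨b, _, hb⟩
  · exact absurd (h ▸ hs₀k) hsK
  · exact ⟨(b, s), hb, fun h => hsK (hTk h).2⟩
end

section
/- Let (P_k, F_k, S_k, T_k) be a known process model that is incomplete with respect to a ground truth process model (P_r, F_r, S_r, T_r) with initial state s₀, and assume the two models are connected by inclusion and projection, that T_k ⊆ S_k × S_k, and that s₀ ∈ S_k. Then either some transition in T_r is an instance of Process Model Inconsistency, or there exist a forced transition (s_a, s_b) ∈ T_r \ T_k and variable assignments p_a, p_b ∈ P_r with F_r(p_a) = s_a and F_r(p_b) = s_b such that the pair (p_a, p_b) is correctly observed in the known process model. -/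
/-- Theorem: detection: If the known process model is incomplete with
respect to a connected ground truth model (with initial state `s₀ ∈ S_k`), then
either some transition of `T_r` is an instance of PMI, or some forced transition
`(s_a, s_b) ∈ T_r \ T_k` arises from a pair of variable assignments that is
correctly observed in the known process model. -/
theorem detection {V σ : Type*} {m n : ℕ}
    (K : ProcessModel (Fin m → V) σ) (R : ProcessModel (Fin n → V) σ)
    (C : Connection K R)
    (s₀ : σ) (hs₀r : s₀ ∈ R.S)
    (hreach : ∀ s ∈ R.S, Relation.ReflTransGen (fun a b => (a, b) ∈ R.T) s₀ s)
    (hTk : K.T ⊆ K.S ×ˢ K.S)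
    (hs₀k : s₀ ∈ K.S)
    (hincomplete : (R.S \ K.S).Nonempty ∨ (R.T \ K.T).Nonempty) :
    (∃ t ∈ R.T, PMI K R C.hmn.le t.1 t.2) ∨
    (∃ t ∈ R.T \ K.T, ∃ pa pb : Fin n → V,
      R.F pa = some t.1 ∧ R.F pb = some t.2 ∧
      CorrectlyObserved K R C.hmn.le pa ∧ CorrectlyObserved K R C.hmn.le pb) := by
  have key : (R.T \ K.T).Nonempty := by
    rcases hincomplete with ⟨s, hsr, hsk⟩ | h
    · by_contra hne
      have hsub : ∀ t ∈ R.T, t ∈ K.T := by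
        intro t ht
        by_contra hk
        exact hne ⟨t, ht, hk⟩
      have hr := hreach s hsr
      apply hsk
      cases hr with
      | refl => exact hs₀k
      | tail _ hbc => exact (hTk (hsub _ hbc)).2
    · exact h
  obtain ⟨t, htr, htk⟩ := key
  obtain ⟨pa, ha⟩ := R.surj t.1 (R.T_sub htr).1
  obtain ⟨pb, hb⟩ := R.surj t.2 (R.T_sub htr).2
  by_cases hc : CorrectlyObserved K R C.hmn.le pa ∧ CorrectlyObserved K R C.hmn.le pb
  · exact Or.inr ⟨t, ⟨htr, htk⟩, pa, pb, ha, hb, hc.1, hc.2⟩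
  · exact Or.inl ⟨t, htr, pa, pb, ha, hb, Or.inr hc⟩
end

section
/- Let (P_k, F_k, S_k, T_k) be a known process model and (P_r, F_r, S_r, T_r) a ground truth process model with initial state s₀. Assume T_k ⊆ S_k × S_k and s₀ ∈ S_k. If the known process model is incomplete (i.e., S_r \ S_k ≠ ∅ or T_r \ T_k ≠ ∅), then there exists a forced transition, i.e., some t ∈ T_r \ T_k. -/
/-- If the known model is incomplete (`S_r \ S_k ≠ ∅` or `T_r \ T_k ≠ ∅`)
with respect to a ground truth model with initial state `s₀ ∈ S_k`, then there is a
forced transition `t ∈ T_r \ T_k`. -/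
theorem incomplete_implies_forced_transition {Vk Vr σ : Type*}
    (K : ProcessModel Vk σ) (R : ProcessModel Vr σ)
    (s₀ : σ) (hs₀r : s₀ ∈ R.S)
    (hreach : ∀ s ∈ R.S, Relation.ReflTransGen (fun a b => (a, b) ∈ R.T) s₀ s)
    (hTk : K.T ⊆ K.S ×ˢ K.S)
    (hs₀k : s₀ ∈ K.S)
    (hincomplete : (R.S \ K.S).Nonempty ∨ (R.T \ K.T).Nonempty) :
    ∃ t, t ∈ R.T \ K.T := by
  rcases hincomplete with ⟨s, hsr, hsk⟩ | h
  · by_contra hno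
    have hsub : ∀ t ∈ R.T, t ∈ K.T := fun t ht => by
      by_contra hk
      exact hno ⟨t, ht, hk⟩
    apply hsk
    rcases Relation.ReflTransGen.cases_tail (hreach s hsr) with h | ⟨c, _, hc⟩
    · rw [h]
      exact hs₀k
    · exact (hTk (hsub _ hc)).2
  · exact h
end

section
/- The converse of the detection theorem fails: there exist a known process model (P_k, F_k, S_k, T_k) and a ground truth process model (P_r, F_r, S_r, T_r) with initial state s₀ that are connected by inclusion and projection, such that the known model is both complete and correct (S_k = S_r and T_k = T_r), yet some transition in T_r is an instance of Process Model Inconsistency. -/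
/-- The converse of the detection theorem fails: there are connected
known and ground truth process models such that the known model is complete and
correct (`S_k = S_r` and `T_k = T_r`), yet some transition of `T_r` is an instance
of PMI. -/
theorem converse_of_detection_fails :
    ∃ (V σ : Type) (m n : ℕ)
      (K : ProcessModel (Fin m → V) σ) (R : ProcessModel (Fin n → V) σ)
      (C : Connection K R) (s₀ : σ),
      s₀ ∈ R.S ∧
      (∀ s ∈ R.S, Relation.ReflTransGen (fun a b => (a, b) ∈ R.T) s₀ s) ∧
      K.S = R.S ∧ K.T = R.T ∧
      ∃ t ∈ R.T, PMI K R C.hmn.le t.1 t.2 := by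
  let K : ProcessModel (Fin 1 → Bool) Bool :=
    { P := Set.univ, S := Set.univ, F := fun p => some (p 0)
      dom_sub := fun _ _ _ => trivial
      range_sub := fun _ _ _ => trivial
      surj := fun s _ => ⟨fun _ => s, rfl⟩
      T := Set.univ
      T_sub := fun _ _ => ⟨trivial, trivial⟩ }
  let R : ProcessModel (Fin 2 → Bool) Bool :=
    { P := Set.univ, S := Set.univ, F := fun p => some (p 1)
      dom_sub := fun _ _ _ => trivial
      range_sub := fun _ _ _ => trivial
      surj := fun s _ => ⟨fun _ => s, rfl⟩
      T := Set.univ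
      T_sub := fun _ _ => ⟨trivial, trivial⟩ }
  let C : Connection K R :=
    { hmn := by decide
      Pk := fun _ => Set.univ
      Pr := fun _ => Set.univ
      hPk := by ext; simp [K]
      hPr := by ext; simp [R]
      hsub := fun _ _ _ => trivial }
  refine ⟨Bool, Bool, 1, 2, K, R, C, false, trivial,
    fun s _ => Relation.ReflTransGen.single trivial, rfl, rfl, (false, false), trivial,
    ![true, false], ![true, false], rfl, rfl, Or.inr ?_⟩
  rintro ⟨⟨_, h⟩, _⟩
  have h2 : some true = some false := h
  simp at h2
end
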